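/- Let G be a maxPDAG with node set V, let X ⊂ V and Y ∈ V \ X such that G is amenable relative to (X,{Y}) and a valid adjustment set relative to (X,{Y}) in G exists (generalised adjustment criterion). Then the forbidden projection G^{XY} contains no bi-directed edges and no directed cycles, and G^{XY} is closed under Meek's orientation rules R1–R4; in particular, G^{XY} is itself a maxPDAG. -/

import Mathlib

/-! Framework for causal graphs: mixed graphs (directed, undirected, bi-directed edges),
paths as lists of typed steps, (possibly) directed paths, descendants, causal nodes,
forbidden sets, (definite-status) blocking, valid adjustment sets, Meek's rules,
maxPDAGs, latent/forbidden projections, d-separation. -/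

namespace Causal

universe u

variable {V : Type u}

/-- A mixed graph with directed, undirected and bi-directed edge relations. -/
structure MixedGraph (V : Type u) where
  dir : V → V → Prop
  undir : V → V → Prop
  bidir : V → V → Prop

/-- The kind of an edge as traversed along a path: forward directed (`a → b`),
backward directed (`a ← b`), undirected (`a − b`), or bi-directed (`a ↔ b`). -/
inductive EdgeKind : Type
  | fwd | bwd | und | bid
  deriving DecidableEq

/-- A step of a path: source node, kind of traversed edge, destination node. -/
abbrev Step (V : Type u) := V × EdgeKind × V

namespace Step
def src (s : Step V) : V := s.1
def kind (s : Step V) : EdgeKind := s.2.1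
def dst (s : Step V) : V := s.2.2
end Step

/-- The step `s` traverses an actual edge of `G`. Undirected and bi-directed
edge relations are used symmetrically. -/
def stepOK (G : MixedGraph V) (s : Step V) : Prop :=
  match Step.kind s with
  | EdgeKind.fwd => G.dir (Step.src s) (Step.dst s)
  | EdgeKind.bwd => G.dir (Step.dst s) (Step.src s)
  | EdgeKind.und => G.undir (Step.src s) (Step.dst s) ∨ G.undir (Step.dst s) (Step.src s)
  | EdgeKind.bid => G.bidir (Step.src s) (Step.dst s) ∨ G.bidir (Step.dst s) (Step.src s)

/-- The sequence of nodes visited by a list of steps. -/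
def pathNodes : List (Step V) → List V
  | [] => []
  | s :: rest => Step.src s :: (s :: rest).map Step.dst

/-- `p` is a path in `G`: a nonempty chain of valid steps visiting distinct nodes. -/
structure IsPath (G : MixedGraph V) (p : List (Step V)) : Prop where
  nonempty : p ≠ []
  valid : ∀ s ∈ p, stepOK G s
  chain : p.Chain' (fun s t => Step.dst s = Step.src t)
  nodup : (pathNodes p).Nodup

/-- The path starts at node `a`. -/
def startsAt (p : List (Step V)) (a : V) : Prop := (pathNodes p).head? = some a

/-- The path ends at node `b`. -/
def endsAt (p : List (Step V)) (b : V) : Prop := (pathNodes p).getLast? = some b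

/-- The non-endpoint (interior) nodes of the path. -/
def interiorNodes (p : List (Step V)) : List V := ((pathNodes p).drop 1).dropLast

/-- Consecutive pairs of steps of a path. -/
def stepPairs (p : List (Step V)) : List (Step V × Step V) := p.zip p.tail

/-- Does an edge of this kind have an arrowhead at the destination of its step? -/
def headAtDst : EdgeKind → Prop
  | EdgeKind.fwd => True | EdgeKind.bwd => False
  | EdgeKind.und => False | EdgeKind.bid => True

/-- Does an edge of this kind have an arrowhead at the source of its step? -/
def headAtSrc : EdgeKind → Prop
  | EdgeKind.fwd => False | EdgeKind.bwd => True
  | EdgeKind.und => False | EdgeKind.bid => True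

/-- `v` is a collider on the path `p`: both adjacent edges have an arrowhead at `v`. -/
def colliderAt (p : List (Step V)) (v : V) : Prop :=
  ∃ q ∈ stepPairs p, Step.dst q.1 = v ∧ headAtDst (Step.kind q.1) ∧ headAtSrc (Step.kind q.2)

/-- `v` is a non-endpoint non-collider on the path `p`. -/
def nonColliderAt (p : List (Step V)) (v : V) : Prop :=
  v ∈ interiorNodes p ∧ ¬ colliderAt p v

/-- Two nodes are adjacent if they are joined by some edge. -/
def adjacent (G : MixedGraph V) (a b : V) : Prop :=
  G.dir a b ∨ G.dir b a ∨ G.undir a b ∨ G.undir b a ∨ G.bidir a b ∨ G.bidir b a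

/-- `v` is a definite non-collider on `p`: at least one adjacent edge is directed
out of `v`, or both adjacent edges are undirected and the neighbours of `v` on `p`
are non-adjacent. -/
def defNonColliderAt (G : MixedGraph V) (p : List (Step V)) (v : V) : Prop :=
  ∃ q ∈ stepPairs p, Step.dst q.1 = v ∧
    (Step.kind q.1 = EdgeKind.bwd ∨ Step.kind q.2 = EdgeKind.fwd ∨
      (Step.kind q.1 = EdgeKind.und ∧ Step.kind q.2 = EdgeKind.und ∧
        ¬ adjacent G (Step.src q.1) (Step.dst q.2)))

/-- Every non-endpoint node of `p` is a collider or a definite non-collider. -/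
def definiteStatus (G : MixedGraph V) (p : List (Step V)) : Prop :=
  ∀ q ∈ stepPairs p,
    (headAtDst (Step.kind q.1) ∧ headAtSrc (Step.kind q.2)) ∨
    (Step.kind q.1 = EdgeKind.bwd ∨ Step.kind q.2 = EdgeKind.fwd ∨
      (Step.kind q.1 = EdgeKind.und ∧ Step.kind q.2 = EdgeKind.und ∧
        ¬ adjacent G (Step.src q.1) (Step.dst q.2)))

/-- All steps of the path traverse directed edges forwards (a causal/directed path). -/
def allFwd (p : List (Step V)) : Prop := ∀ s ∈ p, Step.kind s = EdgeKind.fwd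

/-- `p` is a directed (causal) path in `G` from `a` to `b`. -/
def directedPathFromTo (G : MixedGraph V) (p : List (Step V)) (a b : V) : Prop :=
  IsPath G p ∧ allFwd p ∧ startsAt p a ∧ endsAt p b

/-- `p` is possibly directed: every edge is undirected or traversed forwards, and
there are no indices `i < j` with a directed edge from the `j`-th to the `i`-th node. -/
def possiblyDirected (G : MixedGraph V) (p : List (Step V)) : Prop :=
  (∀ s ∈ p, Step.kind s = EdgeKind.fwd ∨ Step.kind s = EdgeKind.und) ∧
  (pathNodes p).Pairwise (fun a b => ¬ G.dir b a)

/-- `b` is a descendant of `a`: `b = a` or a directed path from `a` to `b` exists. -/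
def descendant (G : MixedGraph V) (a b : V) : Prop :=
  a = b ∨ ∃ p, directedPathFromTo G p a b

/-- The descendants of a node set. -/
def deSet (G : MixedGraph V) (A : Set V) : Set V := {b | ∃ a ∈ A, descendant G a b}

/-- `b` is a possible descendant of `a`. -/
def possDescendant (G : MixedGraph V) (a b : V) : Prop :=
  a = b ∨ ∃ p, IsPath G p ∧ possiblyDirected G p ∧ startsAt p a ∧ endsAt p b

/-- The possible descendants of a node set. -/
def possdeSet (G : MixedGraph V) (A : Set V) : Set V := {b | ∃ a ∈ A, possDescendant G a b}

/-- `p` is a proper path from `X` to `Y`: only its first node lies in `X`. -/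
def properFromTo (G : MixedGraph V) (p : List (Step V)) (X Y : Set V) : Prop :=
  IsPath G p ∧ (∃ a ∈ X, startsAt p a) ∧ (∃ b ∈ Y, endsAt p b) ∧
    ∀ v ∈ (pathNodes p).tail, v ∉ X

/-- The causal nodes: nodes on proper directed paths from `X` to `Y`, excluding `X`. -/
def cn (G : MixedGraph V) (X Y : Set V) : Set V :=
  {v | v ∉ X ∧ ∃ p, properFromTo G p X Y ∧ allFwd p ∧ v ∈ pathNodes p}

/-- The possibly causal nodes: nodes on proper possibly directed paths from `X` to `Y`,
excluding `X`. -/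
def posscn (G : MixedGraph V) (X Y : Set V) : Set V :=
  {v | v ∉ X ∧ ∃ p, properFromTo G p X Y ∧ possiblyDirected G p ∧ v ∈ pathNodes p}

/-- The forbidden set for DAG-like graphs: `de(cn(X,Y,G),G) ∪ X`. -/
def forbD (G : MixedGraph V) (X Y : Set V) : Set V := deSet G (cn G X Y) ∪ X

/-- The forbidden set for maxPDAGs: `possde(posscn(X,Y,G),G) ∪ X`. -/
def forbP (G : MixedGraph V) (X Y : Set V) : Set V := possdeSet G (posscn G X Y) ∪ X

/-- Parents of a node set (via directed edges). -/
def paSet (G : MixedGraph V) (A : Set V) : Set V := {w | ∃ a ∈ A, G.dir w a}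

/-- The O-set for DAG-like graphs: `pa(cn(X,Y,G),G) \ forb(X,Y,G)`. -/
def OsetD (G : MixedGraph V) (X Y : Set V) : Set V := paSet G (cn G X Y) \ forbD G X Y

/-- The O-set for maxPDAGs: `pa(cn(X,Y,G),G) \ forb(X,Y,G)`. -/
def OsetP (G : MixedGraph V) (X Y : Set V) : Set V := paSet G (cn G X Y) \ forbP G X Y

/-- `v` is an ancestor (via directed paths) of some node of `C`. -/
def ancestorOfSome (G : MixedGraph V) (v : V) (C : Set V) : Prop :=
  ∃ c ∈ C, descendant G v c

/-- The path `p` is blocked by `C`: it contains a non-collider in `C` or a collider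
that is not an ancestor of any node of `C`. -/
def blocked (G : MixedGraph V) (p : List (Step V)) (C : Set V) : Prop :=
  (∃ v ∈ C, nonColliderAt p v) ∨ (∃ v, colliderAt p v ∧ ¬ ancestorOfSome G v C)

/-- The definite-status path `p` is blocked by `C`: it contains a definite non-collider
in `C` or a collider that is not an ancestor of any node of `C`. -/
def blockedDef (G : MixedGraph V) (p : List (Step V)) (C : Set V) : Prop :=
  (∃ v ∈ C, defNonColliderAt G p v) ∨ (∃ v, colliderAt p v ∧ ¬ ancestorOfSome G v C)

/-- Generalised adjustment criterion for DAGs/ADMGs: `Z` is disjoint from `X ∪ Y` and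
from the forbidden set, and every proper non-causal path from `X` to `Y` is blocked. -/
def validAdjDAG (G : MixedGraph V) (X Y Z : Set V) : Prop :=
  Z ∩ (X ∪ Y) = ∅ ∧ Z ∩ forbD G X Y = ∅ ∧
  ∀ p, properFromTo G p X Y → ¬ allFwd p → blocked G p Z

/-- `G` is amenable relative to `(X,Y)`: every proper possibly directed path from `X`
to `Y` starts with a directed edge out of `X`. -/
def amenable (G : MixedGraph V) (X Y : Set V) : Prop :=
  ∀ p, properFromTo G p X Y → possiblyDirected G p →
    ∃ s rest, p = s :: rest ∧ Step.kind s = EdgeKind.fwd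

/-- Generalised adjustment criterion for maxPDAGs: `Z` is disjoint from `X ∪ Y`,
`G` is amenable relative to `(X,Y)`, `Z` avoids the forbidden set, and every proper
non-causal definite-status path from `X` to `Y` is blocked by `Z`. -/
def validAdjMax (G : MixedGraph V) (X Y Z : Set V) : Prop :=
  Z ∩ (X ∪ Y) = ∅ ∧ amenable G X Y ∧ Z ∩ forbP G X Y = ∅ ∧
  ∀ p, properFromTo G p X Y → definiteStatus G p → ¬ possiblyDirected G p →
    blockedDef G p Z

/-- A PDAG: a simple graph with only directed and undirected edges and
no directed cycles. -/
structure IsPDAG (G : MixedGraph V) : Prop where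
  no_bidir : ∀ a b, ¬ G.bidir a b
  undir_symm : ∀ a b, G.undir a b → G.undir b a
  dir_irrefl : ∀ a, ¬ G.dir a a
  undir_irrefl : ∀ a, ¬ G.undir a a
  simple_dd : ∀ a b, G.dir a b → ¬ G.dir b a
  simple_du : ∀ a b, G.dir a b → ¬ G.undir a b
  acyclic : ∀ a b, (∃ p, directedPathFromTo G p a b) → ¬ G.dir b a

/-- A DAG: a PDAG without undirected edges. -/
structure IsDAG (G : MixedGraph V) extends IsPDAG G : Prop where
  no_undir : ∀ a b, ¬ G.undir a b

/-- A maximally oriented PDAG: a PDAG closed under Meek's rules R1–R4. -/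
structure IsMaxPDAG (G : MixedGraph V) extends IsPDAG G : Prop where
  meek1 : ∀ a b c, G.dir a b → G.undir b c → ¬ adjacent G a c → G.dir b c
  meek2 : ∀ a b c, G.dir a b → G.dir b c → G.undir a c → G.dir a c
  meek3 : ∀ a b c d, G.undir a b → G.undir a c → G.undir a d → G.dir b d → G.dir c d →
      ¬ adjacent G b c → G.dir a d
  meek4 : ∀ a b c d, G.undir a b → G.dir a c → G.undir b c → G.dir c d → G.undir b d →
      G.dir b d

/-- The first edge of the path has an arrowhead at the first node. -/
def startsWithArrowIn (p : List (Step V)) : Prop :=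
  ∃ s rest, p = s :: rest ∧ headAtSrc (Step.kind s)

/-- The last edge of the path has an arrowhead at the last node. -/
def endsWithArrowIn (p : List (Step V)) : Prop :=
  ∃ s rest, p = rest ++ [s] ∧ headAtDst (Step.kind s)

/-- Projection of `G` over the node set `F`: the graph on the nodes outside `F` with
(i) a directed edge `a → b` iff `G` has a directed path from `a` to `b` with all
non-endpoint nodes in `F`; (ii) a bi-directed edge `a ↔ b` iff `G` has a path with
at least one non-endpoint node, of the form `a ← ⋯ → b`, on which every non-endpoint
node is a non-collider and lies in `F`; (iii) an undirected edge `a − b` iff `G` has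
the undirected edge `a − b`. -/
def forbProjection (G : MixedGraph V) (F : Set V) : MixedGraph V where
  dir a b := a ∉ F ∧ b ∉ F ∧
    ∃ p, directedPathFromTo G p a b ∧ ∀ v ∈ interiorNodes p, v ∈ F
  bidir a b := a ∉ F ∧ b ∉ F ∧
    ∃ p, IsPath G p ∧ startsAt p a ∧ endsAt p b ∧ interiorNodes p ≠ [] ∧
      startsWithArrowIn p ∧ endsWithArrowIn p ∧
      ∀ v ∈ interiorNodes p, v ∈ F ∧ ¬ colliderAt p v
  undir a b := a ∉ F ∧ b ∉ F ∧ G.undir a b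

/-- The forbidden projection of a DAG `D` with respect to `(X,Y)`:
the latent projection over `forb(X,Y,D) \ (X ∪ Y)`. -/
def dagProj (D : MixedGraph V) (X Y : Set V) : MixedGraph V :=
  forbProjection D (forbD D X Y \ (X ∪ Y))

/-- The forbidden projection of a maxPDAG `G` with respect to `(X,Y)`:
the projection over `forb(X,Y,G) \ (X ∪ Y)`. -/
def maxProj (G : MixedGraph V) (X Y : Set V) : MixedGraph V :=
  forbProjection G (forbP G X Y \ (X ∪ Y))

/-- `A` and `B` are d-separated given `C` in `G`: every path between a node of `A`
and a node of `B` is blocked by `C`. -/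
def dSep (G : MixedGraph V) (A B C : Set V) : Prop :=
  ∀ p a b, a ∈ A → b ∈ B → IsPath G p → startsAt p a → endsAt p b → blocked G p C

/-- A v-structure `a → b ← c` with `a`, `c` non-adjacent. -/
def vStructure (G : MixedGraph V) (a b c : V) : Prop :=
  a ≠ c ∧ G.dir a b ∧ G.dir c b ∧ ¬ adjacent G a c

/-- The DAG `D` is represented by the maxPDAG `G` (i.e. `D ∈ [G]`): `D` is a DAG
with the same adjacencies and v-structures as `G`, and every directed edge of `G`
occurs in `D` with the same orientation. -/
def represents (G D : MixedGraph V) : Prop :=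
  IsDAG D ∧ (∀ a b, adjacent G a b ↔ adjacent D a b) ∧
  (∀ a b c, vStructure G a b c ↔ vStructure D a b c) ∧
  (∀ a b, G.dir a b → D.dir a b)

/-- One step of the pruning procedure: remove from `Z` a node `z` such that `Y` is
d-separated from `z` given `{X} ∪ (Z \ {z})`. -/
def pruneStep (G : MixedGraph V) (X Y : V) (Z Z' : Set V) : Prop :=
  ∃ z ∈ Z, dSep G {Y} {z} ({X} ∪ (Z \ {z})) ∧ Z' = Z \ {z}

/-- `Z'` is a possible result of the pruning procedure started at `Z`: it is reachable
by pruning steps and no further node can be removed. -/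
def pruneResult (G : MixedGraph V) (X Y : V) (Z Z' : Set V) : Prop :=
  Relation.ReflTransGen (pruneStep G X Y) Z Z' ∧
  ∀ z ∈ Z', ¬ dSep G {Y} {z} ({X} ∪ (Z' \ {z}))

end Causal
namespace Causal

/-- The path with nodes `t 0, …, t n` and edge kinds `k 0, …, k (n-1)`. -/
def mkP {V : Type*} (t : ℕ → V) (k : ℕ → EdgeKind) (n : ℕ) : List (Step V) :=
  (List.range n).map (fun i => (t i, k i, t (i + 1)))

section Paths
variable {V : Type*}

lemma mkP_succ (t : ℕ → V) (k : ℕ → EdgeKind) (n : ℕ) :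
    mkP t k (n + 1) = (t 0, k 0, t 1) :: mkP (fun i => t (i + 1)) (fun i => k (i + 1)) n := by
  simp [mkP, List.range_succ_eq_map, Function.comp_def]

lemma mem_mkP {t : ℕ → V} {k : ℕ → EdgeKind} {n : ℕ} {s : Step V} :
    s ∈ mkP t k n ↔ ∃ i < n, s = (t i, k i, t (i + 1)) := by
  simp [mkP, eq_comm]

lemma pathNodes_mkP (t : ℕ → V) (k : ℕ → EdgeKind) {n : ℕ} (hn : 1 ≤ n) :
    pathNodes (mkP t k n) = (List.range (n + 1)).map t := by
  obtain ⟨m, rfl⟩ : ∃ m, n = m + 1 := ⟨n - 1, by omega⟩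
  rw [List.range_succ_eq_map, mkP_succ]
  simp only [pathNodes]
  rw [← mkP_succ]
  simp [mkP, Step.src, Step.dst, Function.comp_def]

lemma mem_pathNodes_mkP {t : ℕ → V} {k : ℕ → EdgeKind} {n : ℕ} (hn : 1 ≤ n) {v : V} :
    v ∈ pathNodes (mkP t k n) ↔ ∃ i ≤ n, t i = v := by
  rw [pathNodes_mkP t k hn]
  simp

lemma startsAt_mkP {t : ℕ → V} {k : ℕ → EdgeKind} {n : ℕ} (hn : 1 ≤ n) {v : V} :
    startsAt (mkP t k n) v ↔ t 0 = v := by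
  rw [startsAt, pathNodes_mkP t k hn, List.range_succ_eq_map]
  simp

lemma endsAt_mkP {t : ℕ → V} {k : ℕ → EdgeKind} {n : ℕ} (hn : 1 ≤ n) {v : V} :
    endsAt (mkP t k n) v ↔ t n = v := by
  rw [endsAt, pathNodes_mkP t k hn, List.range_succ]
  simp

lemma mem_tail_mkP {t : ℕ → V} {k : ℕ → EdgeKind} {n : ℕ} (hn : 1 ≤ n) {v : V} :
    v ∈ (pathNodes (mkP t k n)).tail ↔ ∃ i, 1 ≤ i ∧ i ≤ n ∧ t i = v := by
  rw [pathNodes_mkP t k hn, List.range_succ_eq_map]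
  simp only [List.map_cons, List.map_map, List.tail_cons, List.mem_map, List.mem_range,
    Function.comp]
  constructor
  · rintro ⟨i, hi, rfl⟩
    exact ⟨i + 1, by omega, by omega, rfl⟩
  · rintro ⟨i, h1, h2, rfl⟩
    exact ⟨i - 1, by omega, by congr 1; omega⟩

lemma mem_interior_mkP {t : ℕ → V} {k : ℕ → EdgeKind} {n : ℕ} (hn : 1 ≤ n) {v : V} :
    v ∈ interiorNodes (mkP t k n) ↔ ∃ i, 1 ≤ i ∧ i < n ∧ t i = v := by
  obtain ⟨m, rfl⟩ : ∃ m, n = m + 1 := ⟨n - 1, by omega⟩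
  rw [interiorNodes, pathNodes_mkP t k hn, List.range_succ_eq_map]
  simp only [List.map_cons, List.map_map, List.drop_succ_cons, List.drop_zero, List.range_succ,
    List.map_append, List.map_nil, List.dropLast_concat]
  simp only [List.mem_map, List.mem_range, Function.comp]
  constructor
  · rintro ⟨i, hi, rfl⟩
    exact ⟨i + 1, by omega, by omega, rfl⟩
  · rintro ⟨i, h1, h2, rfl⟩
    exact ⟨i - 1, by omega, by congr 1; omega⟩

lemma mem_stepPairs_mkP {t : ℕ → V} {k : ℕ → EdgeKind} {n : ℕ} {q : Step V × Step V} :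
    q ∈ stepPairs (mkP t k n) ↔ ∃ i, i + 1 < n ∧
      q = ((t i, k i, t (i + 1)), (t (i + 1), k (i + 1), t (i + 2))) := by
  rw [stepPairs, List.mem_iff_getElem]
  simp only [mkP, List.length_zip, List.length_map, List.length_range, List.length_tail,
    List.getElem_zip, List.getElem_map, List.getElem_range, List.getElem_tail]
  constructor
  · rintro ⟨i, hi, rfl⟩
    exact ⟨i, by omega, rfl⟩
  · rintro ⟨i, hi, rfl⟩
    exact ⟨i, by omega, rfl⟩

lemma isPath_mkP {G : MixedGraph V} {t : ℕ → V} {k : ℕ → EdgeKind} {n : ℕ} (hn : 1 ≤ n) :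
    IsPath G (mkP t k n) ↔ (∀ i < n, stepOK G (t i, k i, t (i + 1))) ∧
      ∀ i j, i < j → j ≤ n → t i ≠ t j := by
  constructor
  · intro h
    refine ⟨fun i hi => h.valid _ (mem_mkP.2 ⟨i, hi, rfl⟩), ?_⟩
    have := h.nodup
    rw [pathNodes_mkP t k hn] at this
    intro i j hij hj he
    have := List.inj_on_of_nodup_map this (x := i) (y := j) (by simp; omega) (by simp; omega) he
    omega
  · rintro ⟨h1, h2⟩
    refine ⟨?_, ?_, ?_, ?_⟩
    · intro h
      have := congrArg List.length h
      simp [mkP] at this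
      omega
    · intro s hs
      obtain ⟨i, hi, rfl⟩ := mem_mkP.1 hs
      exact h1 i hi
    · show List.IsChain _ _
      rw [mkP, List.isChain_map, List.isChain_iff_getElem]
      intro i hi
      simp [Step.src, Step.dst]
    · rw [pathNodes_mkP t k hn]
      refine List.Nodup.map_on ?_ List.nodup_range
      intro x hx y hy hxy
      simp only [List.mem_range] at hx hy
      rcases lt_trichotomy x y with h | h | h
      · exact absurd hxy (h2 x y h (by omega))
      · exact h
      · exact absurd hxy.symm (h2 y x h (by omega))

lemma exists_mkP_of_chain : ∀ p : List (Step V), p ≠ [] →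
    p.IsChain (fun s t => Step.dst s = Step.src t) →
    ∃ n t k, 1 ≤ n ∧ p = mkP t k n
  | [], h, _ => absurd rfl h
  | [s], _, _ => ⟨1, fun i => if i = 0 then s.1 else s.2.2, fun _ => s.2.1, le_rfl, by
      simp [mkP, List.range_succ]⟩
  | s :: s' :: rest, _, hc => by
      rw [List.isChain_cons_cons] at hc
      obtain ⟨n, t, k, hn, he⟩ := exists_mkP_of_chain (s' :: rest) (by simp) hc.2
      refine ⟨n + 1, fun i => Nat.casesOn i s.1 t, fun i => Nat.casesOn i s.2.1 k, by omega, ?_⟩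
      rw [mkP_succ, he]
      congr 1
      obtain ⟨m, rfl⟩ : ∃ m, n = m + 1 := ⟨n - 1, by omega⟩
      rw [mkP_succ] at he
      have h0 : s' = (t 0, k 0, t 1) := (List.cons.inj he).1
      have h1 := hc.1
      rw [h0] at h1
      simp only [Step.dst, Step.src] at h1
      obtain ⟨a, b, c⟩ := s
      simp only at h1
      subst h1
      rfl

lemma IsPath.exists_mkP {G : MixedGraph V} {p : List (Step V)} (h : IsPath G p) :
    ∃ n t k, 1 ≤ n ∧ p = mkP t k n :=
  exists_mkP_of_chain p h.nonempty h.chain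

lemma possiblyDirected_mkP {G : MixedGraph V} {t : ℕ → V} {k : ℕ → EdgeKind} {n : ℕ}
    (hn : 1 ≤ n) :
    possiblyDirected G (mkP t k n) ↔ (∀ i < n, k i = EdgeKind.fwd ∨ k i = EdgeKind.und) ∧
      ∀ i j, i < j → j ≤ n → ¬ G.dir (t j) (t i) := by
  rw [possiblyDirected, pathNodes_mkP t k hn, List.pairwise_map]
  refine and_congr ?_ ?_
  · constructor
    · intro h i hi
      exact h _ (mem_mkP.2 ⟨i, hi, rfl⟩)
    · intro h s hs
      obtain ⟨i, hi, rfl⟩ := mem_mkP.1 hs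
      exact h i hi
  · rw [List.pairwise_iff_getElem]
    simp only [List.length_range, List.getElem_range]
    constructor
    · intro h i j hij hj
      exact h i j (by omega) (by omega) hij
    · intro h i j _ hj hij
      exact h i j hij (by omega)

/-- Directed walks with interior in `F`. -/
inductive DW (G : MixedGraph V) (F : Set V) (a : V) : V → Prop
  | single {b : V} : G.dir a b → DW G F a b
  | snoc {f b : V} : DW G F a f → f ∈ F → G.dir f b → DW G F a b

lemma DW.transGen {G : MixedGraph V} {F : Set V} {a b : V} (h : DW G F a b) :
    Relation.TransGen G.dir a b := by
  induction h with
  | single h => exact .single h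
  | snoc _ _ h ih => exact ih.tail h

lemma transGen_DW {G : MixedGraph V} {a b : V} (h : Relation.TransGen G.dir a b) :
    DW G Set.univ a b := by
  induction h with
  | single h => exact .single h
  | tail _ h ih => exact .snoc ih trivial h

lemma directed_mkP {G : MixedGraph V} {t : ℕ → V} {n : ℕ} {a b : V} (hn : 1 ≤ n)
    (h1 : ∀ i < n, G.dir (t i) (t (i + 1))) (h2 : ∀ i j, i < j → j ≤ n → t i ≠ t j)
    (ha : t 0 = a) (hb : t n = b) :
    directedPathFromTo G (mkP t (fun _ => EdgeKind.fwd) n) a b := by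
  refine ⟨(isPath_mkP hn).2 ⟨h1, h2⟩, ?_, (startsAt_mkP hn).2 ha, (endsAt_mkP hn).2 hb⟩
  intro s hs
  obtain ⟨i, hi, rfl⟩ := mem_mkP.1 hs
  rfl

lemma directed_exists {G : MixedGraph V} {p : List (Step V)} {a b : V}
    (h : directedPathFromTo G p a b) :
    ∃ n t, 1 ≤ n ∧ p = mkP t (fun _ => EdgeKind.fwd) n ∧ (∀ i < n, G.dir (t i) (t (i + 1))) ∧
      (∀ i j, i < j → j ≤ n → t i ≠ t j) ∧ t 0 = a ∧ t n = b := by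
  obtain ⟨hp, hf, hs, he⟩ := h
  obtain ⟨n, t, k, hn, rfl⟩ := hp.exists_mkP
  have hk : ∀ i < n, k i = EdgeKind.fwd := fun i hi => hf _ (mem_mkP.2 ⟨i, hi, rfl⟩)
  have hp' := (isPath_mkP hn).1 hp
  refine ⟨n, t, hn, ?_, ?_, hp'.2, (startsAt_mkP hn).1 hs, (endsAt_mkP hn).1 he⟩
  · rw [mkP, mkP]
    apply List.map_congr_left
    intro i hi
    rw [hk i (by simpa using hi)]
  · intro i hi
    have := hp'.1 i hi
    rw [hk i hi] at this
    exact this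

lemma DW.exists_path {G : MixedGraph V} (hG : IsPDAG G) {F : Set V} {a b : V}
    (h : DW G F a b) :
    ∃ (n : ℕ) (t : ℕ → V), 1 ≤ n ∧ (∀ i < n, G.dir (t i) (t (i + 1))) ∧
      (∀ i j, i < j → j ≤ n → t i ≠ t j) ∧ t 0 = a ∧ t n = b ∧
      ∀ i, 1 ≤ i → i < n → t i ∈ F := by
  induction h with
  | @single b h =>
    refine ⟨1, fun i => if i = 0 then a else b, le_rfl, ?_, ?_, rfl, rfl, ?_⟩
    · intro i hi
      obtain rfl : i = 0 := by omega
      simpa using h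
    · intro i j hij hj
      obtain rfl : i = 0 := by omega
      obtain rfl : j = 1 := by omega
      simp only [if_true]
      rintro rfl
      exact hG.dir_irrefl _ h
    · intro i h1 h2
      omega
  | @snoc f b _ hf h ih =>
    obtain ⟨n, t, hn, h1, h2, rfl, rfl, h5⟩ := ih
    have hb : ∀ i ≤ n, t i ≠ b := by
      rintro i hi rfl
      rcases Nat.lt_or_ge i n with hlt | hge
      · refine hG.acyclic (t i) (t n) ⟨_, directed_mkP (t := fun l => t (i + l)) (n := n - i)
          (by omega) ?_ ?_ rfl ?_⟩ h
        · intro l hl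
          exact h1 (i + l) (by omega)
        · intro l m hlm hm
          exact h2 _ _ (by omega) (by omega)
        · congr 1
          omega
      · obtain rfl : i = n := by omega
        exact hG.dir_irrefl _ h
    refine ⟨n + 1, fun i => if i ≤ n then t i else b, by omega, ?_, ?_, by simp, by simp, ?_⟩
    · intro i hi
      rcases Nat.lt_or_ge i n with hlt | hge
      · simpa [hlt.le, Nat.succ_le_of_lt hlt] using h1 i hlt
      · obtain rfl : i = n := by omega
        simpa using h
    · intro i j hij hj
      have hi : i ≤ n := by omega
      by_cases hjn : j ≤ n
      · simpa [hi, hjn] using h2 i j hij hjn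
      · simpa [hi, hjn] using hb i hi
    · intro i hi1 hi2
      have hi : i ≤ n := by omega
      simp only [hi, if_true]
      rcases Nat.lt_or_ge i n with hlt | hge
      · exact h5 i hi1 hlt
      · obtain rfl : i = n := by omega
        exact hf

lemma DW.of_seq {G : MixedGraph V} {F : Set V} {t : ℕ → V} {n : ℕ} 
    (h1 : ∀ i < n, G.dir (t i) (t (i + 1))) (h5 : ∀ i, 1 ≤ i → i < n → t i ∈ F) :
    ∀ m, 1 ≤ m → m ≤ n → DW G F (t 0) (t m) := by
  intro m hm
  induction m, hm using Nat.le_induction with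
  | base => intro h; exact .single (h1 0 (by omega))
  | succ m hm ih => intro h; exact .snoc (ih (by omega)) (h5 m hm (by omega)) (h1 m (by omega))

lemma acyc {G : MixedGraph V} (hG : IsPDAG G) {a : V} (h : Relation.TransGen G.dir a a) :
    False := by
  obtain ⟨n, t, hn, -, h2, h3, h4, -⟩ := (transGen_DW h).exists_path hG
  exact h2 0 n (by omega) le_rfl (h3.trans h4.symm)

lemma proj_dir {G : MixedGraph V} (hG : IsPDAG G) {F : Set V} {a b : V} :
    (forbProjection G F).dir a b ↔ a ∉ F ∧ b ∉ F ∧ DW G F a b := by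
  show (a ∉ F ∧ b ∉ F ∧ ∃ p, directedPathFromTo G p a b ∧ ∀ v ∈ interiorNodes p, v ∈ F) ↔ _
  refine and_congr_right fun _ => and_congr_right fun _ => ?_
  constructor
  · rintro ⟨p, hp, hi⟩
    obtain ⟨n, t, hn, rfl, h1, h2, rfl, rfl⟩ := directed_exists hp
    refine DW.of_seq h1 ?_ n hn le_rfl
    intro i hi1 hi2
    exact hi _ ((mem_interior_mkP hn).2 ⟨i, hi1, hi2, rfl⟩)
  · intro h
    obtain ⟨n, t, hn, h1, h2, h3, h4, h5⟩ := h.exists_path hG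
    refine ⟨_, directed_mkP hn h1 h2 h3 h4, ?_⟩
    intro v hv
    obtain ⟨i, hi1, hi2, rfl⟩ := (mem_interior_mkP hn).1 hv
    exact h5 i hi1 hi2

/-! ### Facts about maxPDAGs -/

lemma adj_cases {G : MixedGraph V} (hG : IsPDAG G) {a b : V} (h : adjacent G a b) :
    G.dir a b ∨ G.dir b a ∨ G.undir a b := by
  rcases h with h | h | h | h | h | h
  · exact .inl h
  · exact .inr (.inl h)
  · exact .inr (.inr h)
  · exact .inr (.inr (hG.undir_symm _ _ h))
  · exact absurd h (hG.no_bidir _ _)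
  · exact absurd h (hG.no_bidir _ _)

/-- R1 as a case distinction. -/
lemma r1 {G : MixedGraph V} (hG : IsMaxPDAG G) {a b c : V} (h : G.dir a b) (h' : G.undir b c) :
    G.dir a c ∨ G.dir c a ∨ G.undir a c := by
  by_contra hn
  have hna : ¬ adjacent G a c := fun ha => hn (adj_cases hG.toIsPDAG ha)
  exact hG.simple_du _ _ (hG.meek1 a b c h h' hna) h'

lemma not_undir_of_transGen {G : MixedGraph V} (hG : IsMaxPDAG G) {a b : V}
    (h : Relation.TransGen G.dir a b) : ¬ G.undir a b := by
  induction h with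
  | single h => exact hG.simple_du _ _ h
  | @tail c b hac hcb ih =>
    intro hu
    rcases r1 hG hcb (hG.undir_symm _ _ hu) with h | h | h
    · exact acyc hG.toIsPDAG (hac.tail h)
    · exact hG.simple_du _ _ (hG.meek2 _ _ _ h hcb hu) hu
    · exact ih (hG.undir_symm _ _ h)

lemma dir_of_common {G : MixedGraph V} (hG : IsMaxPDAG G) {a b d : V}
    (h : Relation.TransGen G.dir b d) (hb : G.undir a b) (hd : G.undir a d) : G.dir b d := by
  induction h with
  | single h => exact h
  | @tail f d hbf hfd ih =>
    have hu : G.undir a f := by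
      rcases r1 hG hfd (hG.undir_symm _ _ hd) with h | h | h
      · exact absurd (hG.undir_symm _ _ hb) (not_undir_of_transGen hG (hbf.tail h))
      · exact absurd hd (not_undir_of_transGen hG (Relation.TransGen.tail (.single h) hfd))
      · exact hG.undir_symm _ _ h
    have hbf' := ih hu
    exact absurd hd (hG.simple_du _ _
      (hG.meek4 b a f d (hG.undir_symm _ _ hb) hbf' hu hfd hd))

lemma DW.r1 {G : MixedGraph V} (hG : IsMaxPDAG G) {F : Set V} {a b c : V}
    (h : DW G F a b) (hu : G.undir b c) :
    DW G F a c ∨ G.dir c a ∨ G.undir a c := by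
  induction h with
  | single h =>
    rcases Causal.r1 hG h hu with h | h | h
    · exact .inl (.single h)
    · exact .inr (.inl h)
    · exact .inr (.inr h)
  | @snoc f b hd hf h ih =>
    rcases Causal.r1 hG h hu with h' | h' | h'
    · exact .inl (hd.snoc hf h')
    · exact absurd (hG.undir_symm _ _ hu)
        (not_undir_of_transGen hG (Relation.TransGen.tail (.single h') h))
    · exact ih h'

lemma proj_of_edges {G : MixedGraph V} (hG : IsMaxPDAG G) {F : Set V} 
    (hb : ∀ a b, ¬ (forbProjection G F).bidir a b) : IsMaxPDAG (forbProjection G F) := by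
  have hP := hG.toIsPDAG
  have hdd : ∀ a b, (forbProjection G F).dir a b → Relation.TransGen G.dir a b := fun a b h =>
    ((proj_dir hP).1 h).2.2.transGen
  have hedge : ∀ a b, a ∉ F → b ∉ F → G.dir a b → (forbProjection G F).dir a b :=
    fun a b ha hb h => (proj_dir hP).2 ⟨ha, hb, .single h⟩
  refine { no_bidir := hb, undir_symm := ?_, dir_irrefl := ?_, undir_irrefl := ?_,
           simple_dd := ?_, simple_du := ?_, acyclic := ?_, meek1 := ?_, meek2 := ?_,
           meek3 := ?_, meek4 := ?_ }
  · rintro a b ⟨h1, h2, h3⟩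
    exact ⟨h2, h1, hP.undir_symm _ _ h3⟩
  · intro a h
    exact acyc hP (hdd _ _ h)
  · rintro a ⟨_, _, h⟩
    exact hP.undir_irrefl _ h
  · intro a b h h'
    exact acyc hP ((hdd _ _ h).trans (hdd _ _ h'))
  · rintro a b h ⟨_, _, h'⟩
    exact not_undir_of_transGen hG (hdd _ _ h) h'
  · rintro a b ⟨p, hp⟩ h
    obtain ⟨n, t, hn, -, h1, -, rfl, rfl⟩ := directed_exists hp
    have := (DW.of_seq (F := Set.univ) h1 (fun _ _ _ => trivial) n hn le_rfl).transGen
    have h2 : ∀ x y, Relation.TransGen (forbProjection G F).dir x y →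
        Relation.TransGen G.dir x y := by
      intro x y hxy
      induction hxy with
      | single h => exact hdd _ _ h
      | tail _ h ih => exact ih.trans (hdd _ _ h)
    exact acyc hP ((h2 _ _ this).trans (hdd _ _ h))
  · rintro a b c h ⟨hbF, hcF, hu⟩ hna
    exfalso
    obtain ⟨haF, _, hd⟩ := (proj_dir hP).1 h
    rcases hd.r1 hG hu with h | h | h
    · exact hna (.inl ((proj_dir hP).2 ⟨haF, hcF, h⟩))
    · exact hna (.inr (.inl (hedge _ _ hcF haF h)))
    · exact hna (.inr (.inr (.inl ⟨haF, hcF, h⟩)))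
  · rintro a b c h h' ⟨_, _, hu⟩
    exact absurd hu (not_undir_of_transGen hG ((hdd _ _ h).trans (hdd _ _ h')))
  · rintro a b c d ⟨_, _, hab⟩ ⟨_, _, hac⟩ ⟨_, _, had⟩ hbd hcd hna
    exfalso
    have h1 := dir_of_common hG (hdd _ _ hbd) hab had
    have h2 := dir_of_common hG (hdd _ _ hcd) hac had
    have hbF := ((proj_dir hP).1 hbd).1
    have hcF := ((proj_dir hP).1 hcd).1
    refine hG.simple_du _ _ (hG.meek3 a b c d hab hac had h1 h2 ?_) had
    intro hadj
    rcases adj_cases hP hadj with h | h | h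
    · exact hna (.inl (hedge _ _ hbF hcF h))
    · exact hna (.inr (.inl (hedge _ _ hcF hbF h)))
    · exact hna (.inr (.inr (.inl ⟨hbF, hcF, h⟩)))
  · rintro a b c d ⟨_, _, hab⟩ hac ⟨_, _, hbc⟩ hcd ⟨_, _, hbd⟩
    exfalso
    have h1 := dir_of_common hG (hdd _ _ hac) (hP.undir_symm _ _ hab) hbc
    have h2 := dir_of_common hG (hdd _ _ hcd) hbc hbd
    exact hG.simple_du _ _ (hG.meek4 a b c d hab h1 hbc h2 hbd) hbd

/-! ### Possibly directed sequences -/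

/-- A possibly directed path given by its node sequence. -/
structure PP (G : MixedGraph V) (n : ℕ) (t : ℕ → V) : Prop where
  step : ∀ i < n, G.dir (t i) (t (i + 1)) ∨ G.undir (t i) (t (i + 1))
  noback : ∀ i j, i < j → j ≤ n → ¬ G.dir (t j) (t i)
  inj : ∀ i j, i < j → j ≤ n → t i ≠ t j

lemma PP.takeSeg {G : MixedGraph V} {n m : ℕ} {t : ℕ → V} (h : PP G n t) (hm : m ≤ n) :
    PP G m t :=
  ⟨fun i hi => h.step i (by omega), fun i j hij hj => h.noback i j hij (by omega),
    fun i j hij hj => h.inj i j hij (by omega)⟩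

lemma PP.tailSeg {G : MixedGraph V} {n m : ℕ} {t : ℕ → V} (h : PP G n t) (hm : m ≤ n) :
    PP G (n - m) (fun i => t (m + i)) :=
  ⟨fun i hi => h.step (m + i) (by omega), fun i j hij hj => h.noback _ _ (by omega) (by omega),
    fun i j hij hj => h.inj _ _ (by omega) (by omega)⟩

lemma PP.exists_of_path {G : MixedGraph V} (hG : IsPDAG G) {n : ℕ} {t : ℕ → V} {k : ℕ → EdgeKind}
    (hn : 1 ≤ n) (h : IsPath G (mkP t k n)) (h' : possiblyDirected G (mkP t k n)) :
    PP G n t := by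
  rw [isPath_mkP hn] at h
  rw [possiblyDirected_mkP hn] at h'
  refine ⟨?_, h'.2, h.2⟩
  intro i hi
  have := h.1 i hi
  rcases h'.1 i hi with hk | hk
  · rw [hk] at this
    exact .inl this
  · rw [hk] at this
    rcases this with h | h
    · exact .inr h
    · exact .inr (hG.undir_symm _ _ h)

lemma PP.possDesc {G : MixedGraph V} {n : ℕ} {t : ℕ → V} (h : PP G n t) :
    possDescendant G (t 0) (t n) := by
  classical
  rcases Nat.eq_zero_or_pos n with rfl | hn
  · exact .inl rfl
  right
  refine ⟨mkP t (fun i => if G.dir (t i) (t (i + 1)) then EdgeKind.fwd else EdgeKind.und) n,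
    (isPath_mkP hn).2 ⟨?_, h.inj⟩, (possiblyDirected_mkP hn).2 ⟨?_, h.noback⟩,
    (startsAt_mkP hn).2 rfl, (endsAt_mkP hn).2 rfl⟩
  · intro i hi
    by_cases hd : G.dir (t i) (t (i + 1))
    · rw [if_pos hd]
      exact hd
    · rw [if_neg hd]
      exact .inl ((h.step i hi).resolve_left hd)
  · intro i hi
    by_cases hd : G.dir (t i) (t (i + 1))
    · simp [hd]
    · simp [hd]

lemma possDesc_exists {G : MixedGraph V} (hG : IsPDAG G) {a b : V} (h : possDescendant G a b) :
    ∃ n t, PP G n t ∧ t 0 = a ∧ t n = b := by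
  rcases h with rfl | ⟨p, hp, hd, hs, he⟩
  · exact ⟨0, fun _ => a, ⟨by intro i hi; omega, by intro i j h1 h2; omega,
      by intro i j h1 h2; omega⟩, rfl, rfl⟩
  · obtain ⟨n, t, k, hn, rfl⟩ := hp.exists_mkP
    exact ⟨n, t, PP.exists_of_path hG hn hp hd, (startsAt_mkP hn).1 hs, (endsAt_mkP hn).1 he⟩

/-- Chordless sequences. -/
def Chordless (G : MixedGraph V) (n : ℕ) (t : ℕ → V) : Prop :=
  ∀ i j, i + 1 < j → j ≤ n → ¬ adjacent G (t i) (t j)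

lemma PP.induced {G : MixedGraph V} (hG : IsPDAG G) (n : ℕ) : ∀ t, PP G n t →
    ∃ (n' : ℕ) (e : ℕ → ℕ), StrictMono e ∧ e 0 = 0 ∧ e n' = n ∧ PP G n' (fun l => t (e l)) ∧
      Chordless G n' (fun l => t (e l)) := by
  induction n using Nat.strong_induction_on with
  | _ n ih =>
    intro t h
    by_cases hc : Chordless G n t
    · exact ⟨n, id, strictMono_id, rfl, rfl, h, hc⟩
    · simp only [Chordless, not_forall, not_not] at hc
      obtain ⟨i, j, hij, hj, hadj⟩ := hc
      set e1 : ℕ → ℕ := fun l => if l ≤ i then l else l + (j - i - 1) with he1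
      have hm : StrictMono e1 := by
        intro a b hab
        simp only [he1]
        split_ifs <;> omega
      have hbound : ∀ l, l ≤ n - (j - i - 1) → e1 l ≤ n := by
        intro l hl
        simp only [he1]
        split_ifs <;> omega
      have hP : PP G (n - (j - i - 1)) (fun l => t (e1 l)) := by
        refine ⟨?_, ?_, ?_⟩
        · intro l hl
          rcases lt_trichotomy l i with hli | hli | hli
          · have a1 : e1 l = l := by simp only [he1]; split_ifs <;> omega
            have a2 : e1 (l + 1) = l + 1 := by simp only [he1]; split_ifs <;> omega
            simp only [a1, a2]
            exact h.step l (by omega)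
          · have a1 : e1 l = i := by simp only [he1]; split_ifs <;> omega
            have a2 : e1 (l + 1) = j := by simp only [he1]; split_ifs <;> omega
            simp only [a1, a2]
            rcases adj_cases hG hadj with h1 | h1 | h1
            · exact .inl h1
            · exact absurd h1 (h.noback i j (by omega) hj)
            · exact .inr h1
          · have a1 : e1 l = l + (j - i - 1) := by simp only [he1]; split_ifs <;> omega
            have a2 : e1 (l + 1) = l + (j - i - 1) + 1 := by simp only [he1]; split_ifs <;> omega
            simp only [a1, a2]
            exact h.step _ (by omega)
        · intro a b hab hb
          exact h.noback _ _ (hm hab) (hbound b hb)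
        · intro a b hab hb
          exact h.inj _ _ (hm hab) (hbound b hb)
      obtain ⟨n', e2, hm2, h20, h2n, hP2, hC2⟩ := ih _ (by omega) _ hP
      refine ⟨n', fun l => e1 (e2 l), hm.comp hm2, ?_, ?_, hP2, hC2⟩
      · simp [h20, he1]
      · simp only [h2n, he1]
        split_ifs <;> omega

/-- Along a chordless possibly directed sequence, once an edge is directed, all later ones are. -/
lemma PP.dir_succ {G : MixedGraph V} (hG : IsMaxPDAG G) {n : ℕ} {t : ℕ → V} (h : PP G n t)
    (hc : Chordless G n t) {i : ℕ} (hd : G.dir (t i) (t (i + 1))) :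
    ∀ j, i ≤ j → j < n → G.dir (t j) (t (j + 1)) := by
  intro j hj
  induction j, hj using Nat.le_induction with
  | base => intro _; exact hd
  | succ j hj ih =>
    intro hjn
    have h1 := ih (by omega)
    rcases h.step (j + 1) hjn with h2 | h2
    · exact h2
    · exact hG.meek1 _ _ _ h1 h2 (hc j (j + 1 + 1) (by omega) (by omega))

lemma PP.shape {G : MixedGraph V} (hG : IsMaxPDAG G) {n : ℕ} {t : ℕ → V} (h : PP G n t)
    (hc : Chordless G n t) :
    ∃ s ≤ n, (∀ i < s, G.undir (t i) (t (i + 1))) ∧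
      ∀ i, s ≤ i → i < n → G.dir (t i) (t (i + 1)) := by
  classical
  have hex : ∃ s, n ≤ s ∨ G.dir (t s) (t (s + 1)) := ⟨n, .inl le_rfl⟩
  have hmin : ∀ i < Nat.find hex, i < n ∧ ¬ G.dir (t i) (t (i + 1)) := by
    intro i hi
    have := Nat.find_min hex hi
    push Not at this
    exact this
  refine ⟨Nat.find hex, Nat.find_min' hex (.inl le_rfl), ?_, ?_⟩
  · intro i hi
    exact (h.step i (hmin i hi).1).resolve_left (hmin i hi).2
  · intro i hi hin
    rcases Nat.find_spec hex with h1 | h1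
    · omega
    · exact h.dir_succ hG hc h1 i hi hin

lemma transGen_seq {G : MixedGraph V} {n : ℕ} {t : ℕ → V} {i : ℕ}
    (h : ∀ j, i ≤ j → j < n → G.dir (t j) (t (j + 1))) :
    ∀ j, i < j → j ≤ n → Relation.TransGen G.dir (t i) (t j) := by
  intro j hj
  induction j, hj using Nat.le_induction with
  | base => intro hn; exact .single (h i le_rfl hn)
  | succ j hj ih => intro hn; exact (ih (by omega)).tail (h j (by omega) (by omega))

lemma PP.extend_noback {G : MixedGraph V} (hG : IsMaxPDAG G) {n : ℕ} {t : ℕ → V} {a : V}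
    (h : PP G n t) (hc : Chordless G n t) (ha : G.dir (t n) a) :
    ∀ d j, j + d = n → ¬ G.dir a (t j) := by
  have hP := hG.toIsPDAG
  intro d
  induction d with
  | zero =>
    rintro j hj h1
    obtain rfl : j = n := by omega
    exact hG.simple_dd _ _ ha h1
  | succ d ih =>
    intro j hj h1
    have hdir : ∀ i, i < n → G.dir (t i) (t (i + 1)) → Relation.TransGen G.dir (t i) a := by
      intro i hi hd
      exact (transGen_seq (h.dir_succ hG hc hd) n hi le_rfl).tail ha
    rcases h.step j (by omega) with h2 | h2
    · exact acyc hP ((hdir j (by omega) h2).tail h1)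
    rcases r1 hG h1 h2 with h3 | h3 | h3
    · exact ih (j + 1) (by omega) h3
    · exact hG.simple_du _ _ (hG.meek2 _ _ _ h3 h1 (hP.undir_symm _ _ h2)) (hP.undir_symm _ _ h2)
    · by_cases hj1 : j + 1 = n
      · rw [hj1] at h3
        exact hG.simple_du _ _ ha (hP.undir_symm _ _ h3)
      have hU : G.undir (t (j + 1)) (t (j + 2)) := by
        rcases h.step (j + 1) (by omega) with h4 | h4
        · exact absurd (hP.undir_symm _ _ h3) (not_undir_of_transGen hG (hdir _ (by omega) h4))
        · exact h4
      have hadj : adjacent G (t (j + 1)) (t n) := by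
        rcases r1 hG ha h3 with h4 | h4 | h4
        · exact .inr (.inl h4)
        · exact .inl h4
        · exact .inr (.inr (.inr (.inl h4)))
      have hn : j + 2 = n := by
        by_contra hne
        exact hc (j + 1) n (by omega) le_rfl hadj
      rw [hn] at hU
      exact hG.simple_du _ _ (hG.meek4 _ _ _ _ (hP.undir_symm _ _ hU) ha (hP.undir_symm _ _ h3) h1
        (hP.undir_symm _ _ h2)) (hP.undir_symm _ _ h2)

/-- Possible descendants are closed under children. -/
lemma possDesc_child {G : MixedGraph V} (hG : IsMaxPDAG G) {c f a : V}
    (h : possDescendant G c f) (ha : G.dir f a) : possDescendant G c a := by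
  obtain ⟨n0, t0, h0, rfl, rfl⟩ := possDesc_exists hG.toIsPDAG h
  obtain ⟨n, e, hm, he0, hen, hP, hC⟩ := PP.induced hG.toIsPDAG n0 t0 h0
  set t : ℕ → V := fun l => t0 (e l) with ht
  have e0 : t0 0 = t 0 := by simp [ht, he0]
  have e1 : t0 n0 = t n := by simp [ht, hen]
  rw [e0]
  rw [e1] at ha
  have hnb : ∀ j ≤ n, ¬ G.dir a (t j) := fun j hj =>
    hP.extend_noback hG hC ha (n - j) j (by omega)
  have hne : ∀ j ≤ n, t j ≠ a := by
    rintro j hj rfl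
    rcases Nat.lt_or_ge j n with hlt | hge
    · exact hP.noback _ _ hlt le_rfl ha
    · obtain rfl : j = n := by omega
      exact hG.dir_irrefl _ ha
  have hnew : PP G (n + 1) (fun l => if l ≤ n then t l else a) := by
    refine ⟨?_, ?_, ?_⟩
    · intro i hi
      rcases Nat.lt_or_ge i n with hlt | hge
      · simpa [hlt.le, Nat.succ_le_of_lt hlt] using hP.step i hlt
      · obtain rfl : i = n := by omega
        left
        simpa using ha
    · intro i j hij hj
      have hi : i ≤ n := by omega
      by_cases hjn : j ≤ n
      · simpa [hi, hjn] using hP.noback i j hij hjn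
      · simpa [hi, hjn] using hnb i hi
    · intro i j hij hj
      have hi : i ≤ n := by omega
      by_cases hjn : j ≤ n
      · simpa [hi, hjn] using hP.inj i j hij hjn
      · simpa [hi, hjn] using hne i hi
  simpa using hnew.possDesc

/-! ### Treks from `X` to `Y` -/

/-- A walk of the form `← ⋯ ← − ⋯ − → ⋯ →` from `X` to `Y`, not starting with `→`,
whose later nodes avoid `X` and whose interior avoids `Z`. -/
structure GoodW (G : MixedGraph V) (X Z : Set V) (Y : V) (n : ℕ) (t : ℕ → V) (r s : ℕ) :
    Prop where
  hs : 1 ≤ s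
  hrs : r ≤ s
  hsn : s ≤ n
  hB : ∀ i < r, G.dir (t (i + 1)) (t i)
  hU : ∀ i, r ≤ i → i < s → G.undir (t i) (t (i + 1))
  hF : ∀ i, s ≤ i → i < n → G.dir (t i) (t (i + 1))
  h0 : t 0 ∈ X
  hn : t n = Y
  hX : ∀ i, 1 ≤ i → i ≤ n → t i ∉ X
  hZ : ∀ i, 1 ≤ i → i < n → t i ∉ Z

/-- Cutting out `d` nodes after position `i`. -/
lemma GoodW.cut {G : MixedGraph V} {X Z : Set V} {Y : V} {n : ℕ} {t : ℕ → V} {r s : ℕ}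
    (h : GoodW G X Z Y n t r s) (i d r' s' : ℕ) (hid : i + d ≤ n)
    (hend : i + d = n → t i = Y)
    (hs' : 1 ≤ s') (hrs' : r' ≤ s') (hsn' : s' ≤ n - d)
    (hl : ∀ l < i, (l < r' ↔ l < r) ∧ (l < s' ↔ l < s))
    (hg : ∀ l, i < l → (l < r' ↔ l + d < r) ∧ (l < s' ↔ l + d < s))
    (hiB : i < n - d → i < r' → G.dir (t (i + 1 + d)) (t i))
    (hiU : i < n - d → r' ≤ i → i < s' → G.undir (t i) (t (i + 1 + d)))
    (hiF : i < n - d → s' ≤ i → G.dir (t i) (t (i + 1 + d))) :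
    GoodW G X Z Y (n - d) (fun l => t (if l ≤ i then l else l + d)) r' s' := by
  have e1 : ∀ l, l ≤ i → (if l ≤ i then l else l + d) = l := fun l hl => if_pos hl
  have e2 : ∀ l, i < l → (if l ≤ i then l else l + d) = l + d := fun l hl => if_neg (by omega)
  have e3 : ∀ l, l + 1 + d = l + d + 1 := fun l => by omega
  refine ⟨hs', hrs', hsn', ?_, ?_, ?_, ?_, ?_, ?_, ?_⟩
  · intro l hlr
    rcases lt_trichotomy l i with hli | rfl | hli
    · simp only [e1 l hli.le, e1 (l + 1) hli]
      exact h.hB l ((hl l hli).1.1 hlr)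
    · simp only [e1 l le_rfl, e2 (l + 1) (by omega)]
      exact hiB (by omega) hlr
    · simp only [e2 l hli, e2 (l + 1) (by omega)]
      rw [e3]
      exact h.hB _ ((hg l hli).1.1 hlr)
  · intro l hlr hls
    rcases lt_trichotomy l i with hli | rfl | hli
    · simp only [e1 l hli.le, e1 (l + 1) hli]
      have := hl l hli
      exact h.hU l (by omega) (by omega)
    · simp only [e1 l le_rfl, e2 (l + 1) (by omega)]
      exact hiU (by omega) hlr hls
    · simp only [e2 l hli, e2 (l + 1) (by omega)]
      rw [e3]
      have := hg l hli
      exact h.hU (l + d) (by omega) (by omega)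
  · intro l hls hln
    rcases lt_trichotomy l i with hli | rfl | hli
    · simp only [e1 l hli.le, e1 (l + 1) hli]
      have := hl l hli
      exact h.hF l (by omega) (by omega)
    · simp only [e1 l le_rfl, e2 (l + 1) (by omega)]
      exact hiF hln hls
    · simp only [e2 l hli, e2 (l + 1) (by omega)]
      rw [e3]
      have := hg l hli
      exact h.hF (l + d) (by omega) (by omega)
  · simpa using h.h0
  · rcases Nat.lt_or_ge i (n - d) with hi | hi
    · simp only [e2 _ hi]
      rw [Nat.sub_add_cancel (by omega)]
      exact h.hn
    · simp only [e1 _ hi]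
      have : n - d = i := by omega
      rw [this]
      exact hend (by omega)
  · intro l h1 h2
    refine h.hX _ ?_ ?_ <;> split_ifs <;> omega
  · intro l h1 h2
    refine h.hZ _ ?_ ?_ <;> split_ifs <;> omega

/-- If a valid adjustment set exists, then there are no such treks. -/
lemma no_goodW {G : MixedGraph V} (hG : IsMaxPDAG G) {X Z : Set V} {Y : V}
    (hZ : validAdjMax G X {Y} Z) (n : ℕ) : ∀ t r s, ¬ GoodW G X Z Y n t r s := by
  have hP := hG.toIsPDAG
  induction n using Nat.strong_induction_on with
  | _ n hmin =>
  intro t r s h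
  obtain ⟨-, hamen, -, hblock⟩ := hZ
  have hs := h.hs
  have hrs := h.hrs
  have hsn := h.hsn
  -- cuts
  have cutU : ∀ i j, r ≤ i → i ≤ s → i + 2 ≤ j → j ≤ n → ¬ G.undir (t i) (t j) := by
    intro i j h1 h2 h3 h4 hu
    have ej : i + 1 + (j - i - 1) = j := by omega
    refine hmin (n - (j - i - 1)) (by omega) _ _ _ (h.cut i (j - i - 1) r
      (max (i + 1) (s - (j - i - 1))) (by omega) (by omega) (by omega) (by omega) (by omega)
      (by omega) (by omega) (by omega) ?_ (by omega))
    intro _ _ _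
    rw [ej]
    exact hu
  have cutF : ∀ i j, 1 ≤ i → r ≤ i → i ≤ s → s ≤ j → i + 2 ≤ j → j ≤ n →
      ¬ G.dir (t i) (t j) := by
    intro i j h0 h1 h2 h2' h3 h4 hu
    have ej : i + 1 + (j - i - 1) = j := by omega
    refine hmin (n - (j - i - 1)) (by omega) _ _ _ (h.cut i (j - i - 1) r
      i (by omega) (by omega) (by omega) (by omega) (by omega)
      (by omega) (by omega) (by omega) (by omega) ?_)
    intro _ _
    rw [ej]
    exact hu
  have cutB : ∀ i j, i ≤ r → r ≤ j → i + 2 ≤ j → j ≤ n → ¬ G.dir (t j) (t i) := by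
    intro i j h1 h2 h3 h4 hu
    have ej : i + 1 + (j - i - 1) = j := by omega
    refine hmin (n - (j - i - 1)) (by omega) _ _ _ (h.cut i (j - i - 1) (i + 1)
      (max (i + 1) (s - (j - i - 1))) (by omega) (by omega) (by omega) (by omega) (by omega)
      (by omega) (by omega) ?_ (by omega) (by omega))
    intro _ _
    rw [ej]
    exact hu
  have hinj : ∀ i j, i < j → j ≤ n → t i ≠ t j := by
    intro i j hij hj he
    have hi : 1 ≤ i := by
      by_contra h0
      obtain rfl : i = 0 := by omega
      exact h.hX j (by omega) hj (he ▸ h.h0)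
    have e1 : i + 1 + (j - i) = j + 1 := by omega
    refine hmin (n - (j - i)) (by omega) _ _ _ (h.cut i (j - i) (max (min r i) (r - (j - i)))
      (max (min s i) (s - (j - i))) (by omega) ?_ (by omega) (by omega) (by omega)
      (by omega) (by omega) ?_ ?_ ?_)
    · intro hjn
      obtain rfl : j = n := by omega
      rw [he]
      exact h.hn
    · intro h1 h2
      rw [e1, he]
      exact h.hB j (by omega)
    · intro h1 h2 h3
      rw [e1, he]
      exact h.hU j (by omega) (by omega)
    · intro h1 h2
      rw [e1, he]
      exact h.hF j (by omega) (by omega)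
  -- no back edges into the undirected part
  have hL : ∀ i j, r ≤ i → i ≤ s → i < j → j ≤ n → ¬ G.dir (t j) (t i) := by
    intro i j hri his hij hj hd
    have key : ∀ d l, l + d = i → r ≤ l → G.dir (t j) (t l) := by
      intro d
      induction d with
      | zero =>
        intro l hl _
        obtain rfl : l = i := by omega
        exact hd
      | succ d ih =>
        intro l hl hrl
        have h1 := ih (l + 1) (by omega) (by omega)
        have h2 := h.hU l hrl (by omega)
        rcases r1 hG h1 (hP.undir_symm _ _ h2) with h3 | h3 | h3
        · exact h3
        · exact absurd h2 (hG.simple_du _ _ (hG.meek2 _ _ _ h3 h1 h2))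
        · exact absurd (hP.undir_symm _ _ h3) (cutU l j hrl (by omega) (by omega) hj)
    have h1 := key (i - r) r (by omega) le_rfl
    rcases Nat.lt_or_ge (r + 1) j with hlt | hge
    · exact cutB r j le_rfl (by omega) (by omega) hj h1
    · obtain rfl : j = r + 1 := by omega
      rcases Nat.lt_or_ge r s with h2 | h2
      · exact hG.simple_du _ _ h1 (hP.undir_symm _ _ (h.hU r le_rfl h2))
      · exact hG.simple_dd _ _ h1 (h.hF r h2 (by omega))
  have hM : ∀ i, 1 ≤ i → r ≤ i → ∀ j, i + 2 ≤ j → j ≤ s → ¬ G.dir (t i) (t j) := by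
    intro i hi hri j hij hj hd
    have key : ∀ l, j ≤ l → l ≤ s → G.dir (t i) (t l) := by
      intro l hl
      induction l, hl using Nat.le_induction with
      | base => intro _; exact hd
      | succ l hl ih =>
        intro hls
        have h1 := ih (by omega)
        have h2 := h.hU l (by omega) (by omega)
        rcases r1 hG h1 h2 with h3 | h3 | h3
        · exact h3
        · exact absurd h3 (hL i (l + 1) hri (by omega) (by omega) (by omega))
        · exact absurd h3 (cutU i (l + 1) hri (by omega) (by omega) (by omega))
    exact cutF i s hi hri (by omega) le_rfl (by omega) hsn (key s hj le_rfl)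
  -- the trek as a path
  have hn1 : 1 ≤ n := by omega
  set k : ℕ → EdgeKind := fun i =>
    if i < r then EdgeKind.bwd else if i < s then EdgeKind.und else EdgeKind.fwd with hk
  have kB : ∀ i, i < r → k i = EdgeKind.bwd := fun i hi => by simp [hk, hi]
  have kU : ∀ i, r ≤ i → i < s → k i = EdgeKind.und := fun i h1 h2 => by
    simp [hk, h2, Nat.not_lt.2 h1]
  have kF : ∀ i, s ≤ i → k i = EdgeKind.fwd := fun i h2 => by
    simp [hk, Nat.not_lt.2 h2, Nat.not_lt.2 (hrs.trans h2)]
  have hpath : IsPath G (mkP t k n) := by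
    refine (isPath_mkP hn1).2 ⟨?_, hinj⟩
    intro i hi
    rcases Nat.lt_or_ge i r with h1 | h1
    · rw [kB i h1]
      exact h.hB i h1
    rcases Nat.lt_or_ge i s with h2 | h2
    · rw [kU i h1 h2]
      exact .inl (h.hU i h1 h2)
    · rw [kF i h2]
      exact h.hF i h2 hi
  have hprop : properFromTo G (mkP t k n) X {Y} := by
    refine ⟨hpath, ⟨t 0, h.h0, (startsAt_mkP hn1).2 rfl⟩, ⟨Y, rfl, (endsAt_mkP hn1).2 h.hn⟩, ?_⟩
    intro v hv
    obtain ⟨i, h1, h2, rfl⟩ := (mem_tail_mkP hn1).1 hv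
    exact h.hX i h1 h2
  rcases Nat.eq_zero_or_pos r with hr0 | hr1
  · -- possibly directed, starting with an undirected edge
    have hpd : possiblyDirected G (mkP t k n) := by
      refine (possiblyDirected_mkP hn1).2 ⟨?_, ?_⟩
      · intro i hi
        rcases Nat.lt_or_ge i s with h2 | h2
        · exact .inr (kU i (by omega) h2)
        · exact .inl (kF i h2)
      · intro i j hij hj hd
        rcases Nat.lt_or_ge s i with h2 | h2
        · exact acyc hP ((transGen_seq (n := n) (t := t) (i := i)
            (fun l h3 h4 => h.hF l (by omega) h4) j hij hj).tail hd)
        · exact hL i j (by omega) h2 hij hj hd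
    obtain ⟨st, rest, he, hst⟩ := hamen _ hprop hpd
    obtain ⟨m, rfl⟩ : ∃ m, n = m + 1 := ⟨n - 1, by omega⟩
    rw [mkP_succ] at he
    have := (List.cons.inj he).1
    rw [← this] at hst
    have h2 : k 0 = EdgeKind.fwd := hst
    rw [kU 0 (by omega) (by omega)] at h2
    exact absurd h2 (by decide)
  · have hnpd : ¬ possiblyDirected G (mkP t k n) := by
      intro hpd
      have := ((possiblyDirected_mkP hn1).1 hpd).1 0 (by omega)
      rw [kB 0 hr1] at this
      exact absurd this (by decide)
    have hds : definiteStatus G (mkP t k n) := by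
      intro q hq
      obtain ⟨i, hi, rfl⟩ := mem_stepPairs_mkP.1 hq
      right
      show k i = EdgeKind.bwd ∨ k (i + 1) = EdgeKind.fwd ∨
        (k i = EdgeKind.und ∧ k (i + 1) = EdgeKind.und ∧ ¬ adjacent G (t i) (t (i + 2)))
      rcases Nat.lt_or_ge i r with h1 | h1
      · exact .inl (kB i h1)
      rcases Nat.lt_or_ge (i + 1) s with h2 | h2
      · refine .inr (.inr ⟨kU i h1 (by omega), kU _ (by omega) h2, ?_⟩)
        intro hadj
        rcases adj_cases hP hadj with h3 | h3 | h3
        · exact hM i (by omega) h1 (i + 2) le_rfl (by omega) h3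
        · exact hL i (i + 2) h1 (by omega) (by omega) (by omega) h3
        · exact cutU i (i + 2) h1 (by omega) le_rfl (by omega) h3
      · exact .inr (.inl (kF _ h2))
    rcases hblock _ hprop hds hnpd with ⟨v, hvZ, q, hq, hv, -⟩ | ⟨v, ⟨q, hq, hv, h1, h2⟩, -⟩
    · obtain ⟨i, hi, rfl⟩ := mem_stepPairs_mkP.1 hq
      have : t (i + 1) = v := hv
      rw [← this] at hvZ
      exact h.hZ (i + 1) (by omega) (by omega) hvZ
    · obtain ⟨i, hi, rfl⟩ := mem_stepPairs_mkP.1 hq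
      have h1' : headAtDst (k i) := h1
      have h2' : headAtSrc (k (i + 1)) := h2
      rcases Nat.lt_or_ge (i + 1) r with h3 | h3
      · rw [kB i (by omega)] at h1'
        exact h1'
      rcases Nat.lt_or_ge (i + 1) s with h4 | h4
      · rw [kU (i + 1) h3 h4] at h2'
        exact h2'
      · rw [kF (i + 1) h4] at h2'
        exact h2'

/-- Possible descendants of possibly causal nodes are not in `X`. -/
lemma not_mem_X_of_possde {G : MixedGraph V} (hG : IsMaxPDAG G) {X Z : Set V} {Y : V}
    (hZ : validAdjMax G X {Y} Z) {x : V} (hx : x ∈ possdeSet G (posscn G X {Y})) : x ∉ X := by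
  classical
  intro hxX
  have hP := hG.toIsPDAG
  have hforb : ∀ v, v ∈ possdeSet G (posscn G X {Y}) → v ∉ Z := by
    intro v hv hvZ
    have : v ∈ Z ∩ forbP G X {Y} := ⟨hvZ, .inl hv⟩
    rw [hZ.2.2.1] at this
    exact this
  obtain ⟨c, hc, hcx⟩ := hx
  have hc' := hc
  obtain ⟨hcX, q, ⟨hq, ⟨x0, hx0, hs0⟩, ⟨y, rfl, hy⟩, hprop⟩, hqd, hcq⟩ := hc'
  obtain ⟨nq, tq, kq, hnq, rfl⟩ := hq.exists_mkP
  obtain ⟨m, hm, hmc⟩ := (mem_pathNodes_mkP hnq).1 hcq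
  have hm0 : m ≠ 0 := by
    rintro rfl
    rw [startsAt_mkP hnq] at hs0
    exact hcX (by rw [← hmc, hs0]; exact hx0)
  have hPq := PP.exists_of_path hP hnq hq hqd
  have hqX : ∀ i, 1 ≤ i → i ≤ nq → tq i ∉ X := fun i h1 h2 =>
    hprop _ ((mem_tail_mkP hnq).2 ⟨i, h1, h2, rfl⟩)
  have hqcn : ∀ i, 1 ≤ i → i ≤ nq → tq i ∈ posscn G X {y} := fun i h1 h2 =>
    ⟨hqX i h1 h2, _, ⟨hq, ⟨x0, hx0, hs0⟩, ⟨y, rfl, hy⟩, hprop⟩, hqd,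
      (mem_pathNodes_mkP hnq).2 ⟨i, h2, rfl⟩⟩
  rw [endsAt_mkP hnq] at hy
  -- chordless sequence from `c` to `Y`
  obtain ⟨b, e, hem, he0, heb, hPb, hCb⟩ := PP.induced hP _ _ (hPq.tailSeg hm)
  obtain ⟨b1, hb1, hbU, hbD⟩ := hPb.shape hG hCb
  -- sequence from `c` to `X`
  obtain ⟨np, tp, hPp, hp0, hpn⟩ := possDesc_exists hP hcx
  have hex : ∃ i, tp i ∈ X := ⟨np, hpn ▸ hxX⟩
  set a0 := Nat.find hex with ha0
  have ha0X : tp a0 ∈ X := Nat.find_spec hex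
  have ha0min : ∀ i < a0, tp i ∉ X := fun i hi => Nat.find_min hex hi
  have ha0np : a0 ≤ np := Nat.find_min' hex (hpn ▸ hxX)
  have ha0pos : a0 ≠ 0 := by
    intro h0
    rw [h0, hp0] at ha0X
    exact hcX ha0X
  obtain ⟨a, e', hem', he0', hea, hPa, hCa⟩ := PP.induced hP _ _ (hPp.takeSeg ha0np)
  obtain ⟨a1, ha1, haU, haD⟩ := hPa.shape hG hCa
  have hapos : a ≠ 0 := by
    rintro rfl
    omega
  have hlt : ∀ i, i < a → e' i < a0 := fun i hi => hea ▸ hem' hi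
  have hble : ∀ i, i ≤ b → m + e i ≤ nq := by
    intro i hi
    have : e i ≤ e b := hem.monotone hi
    omega
  have hjoin : tp (e' 0) = tq (m + e 0) := by
    rw [he0', he0, hp0, Nat.add_zero, hmc]
  refine no_goodW hG hZ (a + b) (fun l => if l ≤ a then tp (e' (a - l)) else tq (m + e (l - a)))
    (a - a1) (a + b1) ⟨by omega, by omega, by omega, ?_, ?_, ?_, ?_, ?_, ?_, ?_⟩
  · intro i hi
    have h1 : i ≤ a := by omega
    have h2 : i + 1 ≤ a := by omega
    have h3 := haD (a - (i + 1)) (by omega) (by omega)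
    have h4 : a - (i + 1) + 1 = a - i := by omega
    rw [h4] at h3
    simpa only [h1, h2, if_true] using h3
  · intro i h1 h2
    rcases Nat.lt_or_ge i a with hia | hia
    · have h3 := haU (a - (i + 1)) (by omega)
      have h4 : a - (i + 1) + 1 = a - i := by omega
      rw [h4] at h3
      rw [if_pos hia.le, if_pos (Nat.succ_le_of_lt hia)]
      exact hP.undir_symm _ _ h3
    · have h3 := hbU (i - a) (by omega)
      have h4 : i - a + 1 = i + 1 - a := by omega
      rw [h4] at h3
      have h5 : (if i ≤ a then tp (e' (a - i)) else tq (m + e (i - a))) = tq (m + e (i - a)) := by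
        split_ifs with h6
        · obtain rfl : i = a := by omega
          simpa using hjoin
        · rfl
      rw [h5, if_neg (by omega : ¬ i + 1 ≤ a)]
      exact h3
  · intro i h1 h2
    have h3 := hbD (i - a) (by omega) (by omega)
    have h4 : i - a + 1 = i + 1 - a := by omega
    rw [h4] at h3
    have h5 : (if i ≤ a then tp (e' (a - i)) else tq (m + e (i - a))) = tq (m + e (i - a)) := by
      split_ifs with h6
      · obtain rfl : i = a := by omega
        simpa using hjoin
      · rfl
    rw [h5, if_neg (by omega : ¬ i + 1 ≤ a)]
    exact h3
  · simpa [hea] using ha0X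
  · have h5 : (if a + b ≤ a then tp (e' (a - (a + b))) else tq (m + e (a + b - a)))
        = tq (m + e b) := by
      split_ifs with h6
      · obtain rfl : b = 0 := by omega
        simpa using hjoin
      · simp
    rw [h5, heb, ← hy]
    congr 1
    omega
  · intro i h1 h2
    split_ifs with h6
    · exact ha0min _ (hlt _ (by omega))
    · exact hqX _ (by omega) (hble _ (by omega))
  · intro i h1 h2
    split_ifs with h6
    · refine hforb _ ⟨c, hc, ?_⟩
      have := (hPp.takeSeg (m := e' (a - i)) (by have := hlt (a - i) (by omega); omega)).possDesc
      rwa [hp0] at this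
    · exact hforb _ ⟨_, hqcn _ (by omega) (hble (i - a) (by omega)), .inl rfl⟩

lemma no_bidir_proj {G : MixedGraph V} (hG : IsMaxPDAG G) {X Z : Set V} {Y : V}
    (hZ : validAdjMax G X {Y} Z) (a b : V) : ¬ (maxProj G X {Y}).bidir a b := by
  rintro ⟨haF, hbF, p, hp, hs, he, hne, hst, hen, hint⟩
  have key : ∀ f v, f ∈ forbP G X {Y} \ (X ∪ {Y}) → G.dir f v →
      v ∉ forbP G X {Y} \ (X ∪ {Y}) → v = Y := by
    rintro f v ⟨hf, hfn⟩ hd hv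
    rcases hf with ⟨c, hc, hcf⟩ | hf
    · have h1 : v ∈ possdeSet G (posscn G X {Y}) := ⟨c, hc, possDesc_child hG hcf hd⟩
      have h2 := not_mem_X_of_possde hG hZ h1
      by_contra hvY
      exact hv ⟨.inl h1, fun h => h.elim h2 hvY⟩
    · exact absurd (Or.inl hf) hfn
  obtain ⟨n, t, k, hn, rfl⟩ := hp.exists_mkP
  have hn2 : 2 ≤ n := by
    by_contra hlt
    obtain ⟨v, hv⟩ := List.exists_mem_of_ne_nil _ hne
    obtain ⟨i, h1, h2, -⟩ := (mem_interior_mkP hn).1 hv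
    omega
  rw [startsAt_mkP hn] at hs
  rw [endsAt_mkP hn] at he
  rw [isPath_mkP hn] at hp
  have hF : ∀ i, 1 ≤ i → i < n → t i ∈ forbP G X {Y} \ (X ∪ {Y}) := fun i h1 h2 =>
    (hint _ ((mem_interior_mkP hn).2 ⟨i, h1, h2, rfl⟩)).1
  have hd0 : G.dir (t 1) (t 0) := by
    obtain ⟨st, rest, hpe, hh⟩ := hst
    obtain ⟨l, rfl⟩ : ∃ l, n = l + 1 := ⟨n - 1, by omega⟩
    rw [mkP_succ] at hpe
    rw [← (List.cons.inj hpe).1] at hh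
    have hh' : headAtSrc (k 0) := hh
    have h0 := hp.1 0 (by omega)
    rcases hk : k 0 with _ | _ | _ | _ <;> rw [hk] at hh' h0
    · exact hh'.elim
    · exact h0
    · exact hh'.elim
    · exact h0.elim (fun h => absurd h (hG.no_bidir _ _)) (fun h => absurd h (hG.no_bidir _ _))
  have hdn : G.dir (t (n - 1)) (t n) := by
    obtain ⟨st, rest, hpe, hh⟩ := hen
    obtain ⟨l, rfl⟩ : ∃ l, n = l + 1 := ⟨n - 1, by omega⟩
    simp only [mkP, List.range_succ, List.map_append, List.map_cons, List.map_nil] at hpe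
    have := (List.append_inj' hpe rfl).2
    rw [← (List.cons.inj this).1] at hh
    have hh' : headAtDst (k l) := hh
    have h0 := hp.1 l (by omega)
    rcases hk : k l with _ | _ | _ | _ <;> rw [hk] at hh' h0
    · exact h0
    · exact hh'.elim
    · exact hh'.elim
    · exact h0.elim (fun h => absurd h (hG.no_bidir _ _)) (fun h => absurd h (hG.no_bidir _ _))
  have e0 : t 0 = Y := key _ _ (hF 1 le_rfl (by omega)) hd0 (by rw [hs]; exact haF)
  have e1 : t n = Y := key _ _ (hF (n - 1) (by omega) (by omega)) hdn (by rw [he]; exact hbF)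
  exact hp.2 0 n (by omega) le_rfl (e0.trans e1.symm)

end Paths
end Causal

open Causal in
/-- For a maxPDAG `G` amenable relative to `(X,{Y})` in which a valid
adjustment set exists: the forbidden projection `G^{XY}` has no bi-directed edges and
no directed cycles, and it is closed under Meek's rules R1–R4; in particular `G^{XY}`
is itself a maxPDAG. -/
theorem forbidden_projection_is_maxpdag
    {V : Type*} [Fintype V] (G : MixedGraph V) (X : Set V) (Y : V)
    (hG : IsMaxPDAG G) (hY : Y ∉ X)
    (hamen : amenable G X {Y}) (hexists : ∃ Z, validAdjMax G X {Y} Z) :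
    (∀ a b, ¬ (maxProj G X {Y}).bidir a b) ∧
    (∀ a b, (∃ p, directedPathFromTo (maxProj G X {Y}) p a b) →
        ¬ (maxProj G X {Y}).dir b a) ∧
    (∀ a b c, (maxProj G X {Y}).dir a b → (maxProj G X {Y}).undir b c →
        ¬ adjacent (maxProj G X {Y}) a c → (maxProj G X {Y}).dir b c) ∧
    (∀ a b c, (maxProj G X {Y}).dir a b → (maxProj G X {Y}).dir b c →
        (maxProj G X {Y}).undir a c → (maxProj G X {Y}).dir a c) ∧
    (∀ a b c d, (maxProj G X {Y}).undir a b → (maxProj G X {Y}).undir a c →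
        (maxProj G X {Y}).undir a d → (maxProj G X {Y}).dir b d →
        (maxProj G X {Y}).dir c d → ¬ adjacent (maxProj G X {Y}) b c →
        (maxProj G X {Y}).dir a d) ∧
    (∀ a b c d, (maxProj G X {Y}).undir a b → (maxProj G X {Y}).dir a c →
        (maxProj G X {Y}).undir b c → (maxProj G X {Y}).dir c d →
        (maxProj G X {Y}).undir b d → (maxProj G X {Y}).dir b d) ∧
    IsMaxPDAG (maxProj G X {Y}) := by
  obtain ⟨Z, hZ⟩ := hexists
  have h : IsMaxPDAG (maxProj G X {Y}) := proj_of_edges hG (no_bidir_proj hG hZ)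
  exact ⟨h.no_bidir, h.acyclic, h.meek1, h.meek2, h.meek3, h.meek4, h⟩
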